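/- For all x, y, z ∈ B^ℕ such that val(z) equals the fractional part of val(x) + val(y): if h̲(x) = 1 and h̄(y) = 0, then h̲(z) = 1. -/

import Mathlib

open Filter Topology

/-- The factor of length `len` of the sequence `x` starting at position `i`. -/
def factor (x : ℕ → Bool) (i len : ℕ) : List Bool :=
  List.ofFn (fun j : Fin len => x (i + j))

/-- Number of (possibly overlapping) occurrences of the word `u`
in the prefix `x[0:n)` of the sequence `x`. -/
def occ (x : ℕ → Bool) (n : ℕ) (u : List Bool) : ℕ :=
  ((Finset.range (n + 1 - u.length)).filter (fun i => factor x i u.length = u)).card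

/-- Non-aligned `ℓ`-block entropy of the prefix `x[0:n)`
(logs are base 2, with the convention `0 · log 0 = 0`). -/
noncomputable def hBlock (ℓ : ℕ) (x : ℕ → Bool) (n : ℕ) : ℝ :=
  -(1 / (ℓ : ℝ)) * ∑ u : Fin ℓ → Bool,
    ((occ x n (List.ofFn u) : ℝ) / ((n : ℝ) - ℓ + 1)) *
      Real.logb 2 ((occ x n (List.ofFn u) : ℝ) / ((n : ℝ) - ℓ + 1))

/-- `h̲(x) = lim_{ℓ→∞} liminf_{n→∞} h_ℓ(x[0:n))` (the limit in `ℓ` exists). -/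
noncomputable def hLow (x : ℕ → Bool) : ℝ :=
  atTop.liminf fun ℓ => atTop.liminf fun n => hBlock ℓ x n

/-- `h̄(x) = lim_{ℓ→∞} limsup_{n→∞} h_ℓ(x[0:n))` (the limit in `ℓ` exists). -/
noncomputable def hUp (x : ℕ → Bool) : ℝ :=
  atTop.limsup fun ℓ => atTop.limsup fun n => hBlock ℓ x n

/-- `γ_ℓ(x[0:n))`: normalized minimal number of prediction errors when predicting
`x[i]` from the preceding `ℓ` symbols `x[i-ℓ:i)`, for `i ∈ {ℓ,…,n-1}`. -/
noncomputable def gammaWord (ℓ : ℕ) (x : ℕ → Bool) (n : ℕ) : ℝ :=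
  (1 / ((n : ℝ) - ℓ)) *
    ((Finset.univ : Finset ((Fin ℓ → Bool) → Bool)).inf' Finset.univ_nonempty
      (fun f => ((((Finset.Ico ℓ n).filter
        (fun i => x i ≠ f (fun j => x (i - ℓ + j)))).card : ℝ))))

/-- `β_ℓ(x[0:n))`: normalized minimal number of prediction errors when predicting
`x[i]` from the following `ℓ` symbols `x[i+1:i+ℓ+1)`, for `i ∈ {0,…,n-ℓ-1}`. -/
noncomputable def betaWord (ℓ : ℕ) (x : ℕ → Bool) (n : ℕ) : ℝ :=
  (1 / ((n : ℝ) - ℓ)) *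
    ((Finset.univ : Finset ((Fin ℓ → Bool) → Bool)).inf' Finset.univ_nonempty
      (fun f => ((((Finset.range (n - ℓ)).filter
        (fun i => x i ≠ f (fun j => x (i + 1 + j)))).card : ℝ))))

/-- `γ̲(x) = lim_{ℓ→∞} liminf_{n→∞} γ_ℓ(x[0:n))` (the limit in `ℓ` exists, by monotonicity). -/
noncomputable def gammaLow (x : ℕ → Bool) : ℝ :=
  atTop.liminf fun ℓ => atTop.liminf fun n => gammaWord ℓ x n

/-- `γ̄(x) = lim_{ℓ→∞} limsup_{n→∞} γ_ℓ(x[0:n))` (the limit in `ℓ` exists, by monotonicity). -/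
noncomputable def gammaUp (x : ℕ → Bool) : ℝ :=
  atTop.limsup fun ℓ => atTop.limsup fun n => gammaWord ℓ x n

/-- `β̲(x) = lim_{ℓ→∞} liminf_{n→∞} β_ℓ(x[0:n))` (the limit in `ℓ` exists, by monotonicity). -/
noncomputable def betaLow (x : ℕ → Bool) : ℝ :=
  atTop.liminf fun ℓ => atTop.liminf fun n => betaWord ℓ x n

/-- `β̄(x) = lim_{ℓ→∞} limsup_{n→∞} β_ℓ(x[0:n))` (the limit in `ℓ` exists, by monotonicity). -/
noncomputable def betaUp (x : ℕ → Bool) : ℝ :=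
  atTop.limsup fun ℓ => atTop.limsup fun n => betaWord ℓ x n

/-- Binary Shannon entropy function `H(α) = -α log α - (1-α) log (1-α)` (base-2 logs). -/
noncomputable def binEntropy (a : ℝ) : ℝ :=
  -(a * Real.logb 2 a) - (1 - a) * Real.logb 2 (1 - a)

/-- Conditional block entropy `Hc^{n,ℓ}(x)`:
`-Σ_{ā ∈ B^ℓ, a ∈ B, p(ā·a) > 0} p(ā·a) · log (p(ā·a)/p(ā))`, where
`p(ā) = occ(x[0:n-1), ā)/(n-ℓ)` and `p(ā·a) = occ(x[0:n), ā·a)/(n-ℓ)`. -/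
noncomputable def condEntropy (ℓ : ℕ) (x : ℕ → Bool) (n : ℕ) : ℝ :=
  -∑ u : Fin ℓ → Bool, ∑ a : Bool,
    (if 0 < ((occ x n (List.ofFn u ++ [a]) : ℝ) / ((n : ℝ) - ℓ)) then
      ((occ x n (List.ofFn u ++ [a]) : ℝ) / ((n : ℝ) - ℓ)) *
        Real.logb 2 (((occ x n (List.ofFn u ++ [a]) : ℝ) / ((n : ℝ) - ℓ)) /
          ((occ x (n - 1) (List.ofFn u) : ℝ) / ((n : ℝ) - ℓ)))
    else 0)

/-- The real number in `[0,1]` denoted by the binary sequence `x`. -/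
noncomputable def val (x : ℕ → Bool) : ℝ :=
  ∑' n : ℕ, (if x n then (1 : ℝ) else 0) / 2 ^ (n + 1)

/-!
In the binary addition of `x` and `y`, the blocks of `y` and `z` at a position and the carry
entering the block from the right determine the block of `x`: digits of `x` and carries are
recovered from right to left. The carry takes at most four values, hence has at most two bits of
entropy, and empirical entropy is subadditive, so `h_ℓ(x) ≤ h_ℓ(y) + h_ℓ(z) + 2 / ℓ` on every
prefix. Letting the length of the prefix and then `ℓ` tend to infinity gives
`hLow x ≤ hUp y + hLow z`.
-/

open scoped BigOperators Finset

section EmpiricalEntropy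

variable {ι α β : Type*} [DecidableEq α] [DecidableEq β] {s : Finset ι} {t : Finset α}

/-- The relative frequency of the value `a` of `W` on the finite sample `s`; it is `0` on the empty
sample. -/
noncomputable def empFreq (s : Finset ι) (W : ι → α) (a : α) : ℝ :=
  #{i ∈ s | W i = a} / #s

/-- The Shannon entropy in bits of the empirical distribution of `W` on the finite sample `s`.
It is written as an average of `-log₂ (empFreq s W (W i))` over the sample rather than as a sum over
values, so that `α` need not be finite. -/
noncomputable def empEntropy (s : Finset ι) (W : ι → α) : ℝ :=
  -𝔼 i ∈ s, Real.logb 2 (empFreq s W (W i))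

lemma empFreq_nonneg (s : Finset ι) (W : ι → α) (a : α) : 0 ≤ empFreq s W a := by
  unfold empFreq
  positivity

lemma empFreq_apply_pos {i : ι} (hi : i ∈ s) (W : ι → α) : 0 < empFreq s W (W i) := by
  have hs : 0 < #s := Finset.card_pos.2 ⟨i, hi⟩
  have hfiber : 0 < #{j ∈ s | W j = W i} := Finset.card_pos.2 ⟨i, by simpa using hi⟩
  unfold empFreq
  positivity

lemma empFreq_pos_of_mem_image {W : ι → α} {a : α} (ha : a ∈ s.image W) : 0 < empFreq s W a := by
  obtain ⟨i, hi, rfl⟩ := Finset.mem_image.1 ha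
  exact empFreq_apply_pos hi W

lemma empFreq_le_one (s : Finset ι) (W : ι → α) (a : α) : empFreq s W a ≤ 1 :=
  div_le_one_of_le₀ (mod_cast Finset.card_filter_le s _) (Nat.cast_nonneg _)

lemma sum_empFreq_mul {W : ι → α} (hW : ∀ i ∈ s, W i ∈ t) (g : α → ℝ) :
    ∑ a ∈ t, empFreq s W a * g a = 𝔼 i ∈ s, g (W i) := by
  rw [Finset.expect_eq_sum_div_card, ← Finset.sum_fiberwise_of_maps_to' hW, Finset.sum_div]
  refine Finset.sum_congr rfl fun a _ => ?_
  rw [Finset.sum_const, nsmul_eq_mul, empFreq, div_mul_eq_mul_div]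

lemma sum_image_empFreq_le_one (s : Finset ι) (W : ι → α) :
    ∑ a ∈ s.image W, empFreq s W a ≤ 1 := by
  have h := sum_empFreq_mul (fun i (hi : i ∈ s) => Finset.mem_image_of_mem W hi) fun _ => 1
  simp only [mul_one] at h
  rw [h, Finset.expect_eq_sum_div_card, Finset.sum_const, nsmul_one]
  exact div_self_le_one _

lemma logb_two_le_sub_one_div {p : ℝ} (hp : 0 < p) : Real.logb 2 p ≤ (p - 1) / Real.log 2 :=
  div_le_div_of_nonneg_right (Real.log_le_sub_one_of_pos hp) (Real.log_pos one_lt_two).le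

lemma empEntropy_le_neg_expect_logb {W : ι → α} {q : α → ℝ} (hW : ∀ i ∈ s, W i ∈ t)
    (hq : ∀ a ∈ t, 0 < q a) (hsum : ∑ a ∈ t, q a ≤ 1) :
    empEntropy s W ≤ -𝔼 i ∈ s, Real.logb 2 (q (W i)) := by
  rcases s.eq_empty_or_nonempty with rfl | hs
  · simp [empEntropy]
  have hratio : 𝔼 i ∈ s, q (W i) / empFreq s W (W i) ≤ 1 := by
    rw [← sum_empFreq_mul hW fun a => q a / empFreq s W a]
    refine (Finset.sum_le_sum fun a ha => ?_).trans hsum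
    rw [mul_div_left_comm]
    exact mul_le_of_le_one_right (hq a ha).le (div_self_le_one _)
  refine neg_le_neg (sub_nonpos.1 ?_)
  calc 𝔼 i ∈ s, Real.logb 2 (q (W i)) - 𝔼 i ∈ s, Real.logb 2 (empFreq s W (W i))
      = 𝔼 i ∈ s, Real.logb 2 (q (W i) / empFreq s W (W i)) := by
        rw [← Finset.expect_sub_distrib]
        exact Finset.expect_congr rfl fun i hi =>
          (Real.logb_div (hq _ (hW i hi)).ne' (empFreq_apply_pos hi W).ne').symm
    _ ≤ 𝔼 i ∈ s, (q (W i) / empFreq s W (W i) - 1) / Real.log 2 :=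
        Finset.expect_le_expect fun i hi =>
          logb_two_le_sub_one_div (div_pos (hq _ (hW i hi)) (empFreq_apply_pos hi W))
    _ = (𝔼 i ∈ s, q (W i) / empFreq s W (W i) - 1) / Real.log 2 := by
        rw [← Finset.expect_div, Finset.expect_sub_distrib, Finset.expect_const hs]
    _ ≤ 0 := div_nonpos_of_nonpos_of_nonneg (sub_nonpos.2 hratio) (Real.log_pos one_lt_two).le

lemma empEntropy_nonneg (s : Finset ι) (W : ι → α) : 0 ≤ empEntropy s W := by
  rw [empEntropy, ← Finset.expect_neg_distrib]
  exact Finset.expect_nonneg fun i _ => neg_nonneg.2 <|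
    Real.logb_nonpos one_lt_two (empFreq_nonneg s W _) (empFreq_le_one s W _)

lemma empEntropy_le_logb_card [Fintype α] (s : Finset ι) (W : ι → α) :
    empEntropy s W ≤ Real.logb 2 (Fintype.card α) := by
  rcases s.eq_empty_or_nonempty with rfl | hs
  · simpa [empEntropy, Real.logb] using
      div_nonneg (Real.log_natCast_nonneg (Fintype.card α)) (Real.log_pos one_lt_two).le
  have : Nonempty α := ⟨W hs.choose⟩
  have h := empEntropy_le_neg_expect_logb (s := s) (t := Finset.univ) (W := W)
    (q := fun _ => (Fintype.card α : ℝ)⁻¹) (fun i _ => Finset.mem_univ (W i))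
    (fun _ _ => by positivity) (by simp)
  rwa [Finset.expect_const hs, Real.logb_inv, neg_neg] at h

lemma empEntropy_le_of_determined {V : ι → α} {W : ι → β}
    (h : ∀ i ∈ s, ∀ j ∈ s, W i = W j → V i = V j) : empEntropy s V ≤ empEntropy s W := by
  refine neg_le_neg (Finset.expect_le_expect fun i hi => ?_)
  refine Real.logb_le_logb_of_le one_lt_two (empFreq_apply_pos hi W) ?_
  refine div_le_div_of_nonneg_right (Nat.cast_le.2 (Finset.card_le_card ?_)) (Nat.cast_nonneg _)
  exact Finset.monotone_filter_right s fun j hj hji => h j hj i hi hji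

lemma empEntropy_prodMk_le (s : Finset ι) (V : ι → α) (W : ι → β) :
    empEntropy s (fun i => (V i, W i)) ≤ empEntropy s V + empEntropy s W := by
  have hsum : ∑ p ∈ s.image V ×ˢ s.image W, empFreq s V p.1 * empFreq s W p.2 ≤ 1 := by
    rw [Finset.sum_product, ← Finset.sum_mul_sum]
    exact mul_le_one₀ (sum_image_empFreq_le_one s V)
      (Finset.sum_nonneg fun b _ => empFreq_nonneg s W b) (sum_image_empFreq_le_one s W)
  calc empEntropy s (fun i => (V i, W i))
      ≤ -𝔼 i ∈ s, Real.logb 2 (empFreq s V (V i) * empFreq s W (W i)) :=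
        empEntropy_le_neg_expect_logb
          (fun i hi => Finset.mk_mem_product (Finset.mem_image_of_mem V hi)
            (Finset.mem_image_of_mem W hi))
          (fun p hp => mul_pos (empFreq_pos_of_mem_image (Finset.mem_product.1 hp).1)
            (empFreq_pos_of_mem_image (Finset.mem_product.1 hp).2)) hsum
    _ = empEntropy s V + empEntropy s W := by
        rw [empEntropy, empEntropy, ← neg_add, ← Finset.expect_add_distrib]
        exact congrArg _ <| Finset.expect_congr rfl fun i hi =>
          Real.logb_mul (empFreq_apply_pos hi V).ne' (empFreq_apply_pos hi W).ne'

end EmpiricalEntropy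

section Block

/-- The block of length `ℓ` of `x` at position `i`, as a function on `Fin ℓ`; `factor x i ℓ` is the
same word as a list. -/
def block {γ : Type*} (x : ℕ → γ) (ℓ i : ℕ) : Fin ℓ → γ := fun j => x (i + j)

lemma block_succ {γ : Type*} (x : ℕ → γ) (ℓ i : ℕ) :
    block x (ℓ + 1) i = Fin.cons (x i) (block x ℓ (i + 1)) := by
  funext j
  cases j using Fin.cases with
  | zero => rfl
  | succ j => simp [block, add_assoc, add_comm 1]

lemma block_succ_eq_block_succ {γ : Type*} {x : ℕ → γ} {ℓ i j : ℕ} :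
    block x (ℓ + 1) i = block x (ℓ + 1) j ↔
      x i = x j ∧ block x ℓ (i + 1) = block x ℓ (j + 1) := by
  rw [block_succ, block_succ, Fin.cons_inj]

variable (ℓ : ℕ) (x : ℕ → Bool) (n : ℕ)

lemma occ_ofFn (u : Fin ℓ → Bool) :
    occ x n (List.ofFn u) = #{i ∈ Finset.range (n + 1 - ℓ) | block x ℓ i = u} := by
  simp only [occ, List.length_ofFn, factor, List.ofFn_inj]
  rfl

lemma occ_div_eq_empFreq (u : Fin ℓ → Bool) :
    (occ x n (List.ofFn u) : ℝ) / ((n : ℝ) - ℓ + 1) =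
      empFreq (Finset.range (n + 1 - ℓ)) (block x ℓ) u := by
  rw [occ_ofFn, empFreq, Finset.card_range]
  rcases le_or_gt ℓ n with h | h
  · rw [Nat.sub_add_comm h, Nat.cast_add_one, Nat.cast_sub h]
  · simp [Nat.sub_eq_zero_of_le h]

lemma hBlock_eq_empEntropy_div :
    hBlock ℓ x n = empEntropy (Finset.range (n + 1 - ℓ)) (block x ℓ) / ℓ := by
  simp only [hBlock, occ_div_eq_empFreq]
  rw [sum_empFreq_mul fun _ _ => Finset.mem_univ _, empEntropy]
  ring

lemma hBlock_mem_Icc : hBlock ℓ x n ∈ Set.Icc 0 1 := by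
  rw [hBlock_eq_empEntropy_div]
  refine ⟨div_nonneg (empEntropy_nonneg _ _) ℓ.cast_nonneg, div_le_one_of_le₀ ?_ ℓ.cast_nonneg⟩
  refine (empEntropy_le_logb_card _ _).trans_eq ?_
  simp [Real.logb_pow]

end Block

section Carry

lemma val_eq_ofDigits (x : ℕ → Bool) :
    val x = Real.ofDigits fun n => finTwoEquiv.symm (x n) := by
  refine tsum_congr fun n => ?_
  cases h : x n <;> simp [Real.ofDigitsTerm, finTwoEquiv, h]

lemma val_mem_Icc (x : ℕ → Bool) : val x ∈ Set.Icc 0 1 := by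
  rw [val_eq_ofDigits]
  exact ⟨Real.ofDigits_nonneg _, Real.ofDigits_le_one _⟩

lemma two_mul_val (x : ℕ → Bool) : 2 * val x = (x 0).toNat + val fun n => x (n + 1) := by
  rw [val_eq_ofDigits, val_eq_ofDigits, Real.ofDigits_eq_sum_add_ofDigits _ 1]
  cases h : x 0 <;> simp [Real.ofDigitsTerm, finTwoEquiv, h, mul_add]

/-- `c` is a sequence of carries for the schoolbook addition `x + y = z` of binary expansions:
`c (i + 1)` enters position `i` from the right and `c i` leaves it to the left. The carries are
integers, not bits, because the expansions may be infinite to the right. -/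
def IsCarry (x y z : ℕ → Bool) (c : ℕ → ℤ) : Prop :=
  ∀ i, ((x i).toNat + (y i).toNat + c (i + 1) : ℤ) = (z i).toNat + 2 * c i

variable {x y z : ℕ → Bool} {c : ℕ → ℤ}

lemma IsCarry.eq_of_succ_eq (hc : IsCarry x y z c) {i j : ℕ} (hy : y i = y j) (hz : z i = z j)
    (hsucc : c (i + 1) = c (j + 1)) : x i = x j ∧ c i = c j := by
  have hi := hc i
  have hj := hc j
  rw [hy, hz, hsucc] at hi
  cases hxi : x i <;> cases hxj : x j <;> simp_all <;> omega

lemma IsCarry.block_eq (hc : IsCarry x y z c) {ℓ i j : ℕ} (hy : block y ℓ i = block y ℓ j)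
    (hz : block z ℓ i = block z ℓ j) (hend : c (i + ℓ) = c (j + ℓ)) :
    block x ℓ i = block x ℓ j ∧ c i = c j := by
  induction ℓ generalizing i j with
  | zero => exact ⟨Subsingleton.elim _ _, hend⟩
  | succ ℓ ih =>
    rw [block_succ_eq_block_succ] at hy hz ⊢
    obtain ⟨htail, hsucc⟩ := ih hy.2 hz.2 (by simpa only [add_assoc, add_comm 1] using hend)
    obtain ⟨hhead, hcarry⟩ := hc.eq_of_succ_eq hy.1 hz.1 hsucc
    exact ⟨⟨hhead, htail⟩, hcarry⟩

lemma exists_isCarry {m : ℤ} (h : val x + val y = val z + m) :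
    ∃ c : ℕ → ℤ, IsCarry x y z c ∧ ∀ i, c i ∈ Finset.Icc (-1 : ℤ) 2 := by
  let tail (w : ℕ → Bool) (i : ℕ) : ℝ := val fun n => w (n + i)
  have tail_succ (w : ℕ → Bool) (i : ℕ) : 2 * tail w i = (w i).toNat + tail w (i + 1) := by
    simpa only [zero_add, add_assoc, add_comm 1] using two_mul_val fun n => w (n + i)
  have exists_int (i : ℕ) : ∃ k : ℤ, tail x i + tail y i = tail z i + k := by
    induction i with
    | zero => exact ⟨m, h⟩
    | succ i ih =>
      obtain ⟨k, hk⟩ := ih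
      refine ⟨(z i).toNat + 2 * k - (x i).toNat - (y i).toNat, ?_⟩
      push_cast
      linarith [tail_succ x i, tail_succ y i, tail_succ z i]
  choose c hc using exists_int
  refine ⟨c, fun i => ?_, fun i => Finset.mem_Icc.2 ?_⟩
  · have : ((x i).toNat + (y i).toNat + c (i + 1) : ℝ) = (z i).toNat + 2 * c i := by
      linarith [tail_succ x i, tail_succ y i, tail_succ z i, hc i, hc (i + 1)]
    exact_mod_cast this
  · obtain ⟨hx₀, hx₁⟩ : tail x i ∈ Set.Icc 0 1 := val_mem_Icc _
    obtain ⟨hy₀, hy₁⟩ : tail y i ∈ Set.Icc 0 1 := val_mem_Icc _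
    obtain ⟨hz₀, hz₁⟩ : tail z i ∈ Set.Icc 0 1 := val_mem_Icc _
    have hlower : (-1 : ℝ) ≤ c i := by linarith [hc i]
    have hupper : (c i : ℝ) ≤ 2 := by linarith [hc i]
    exact ⟨mod_cast hlower, mod_cast hupper⟩

lemma hBlock_le_hBlock_add_hBlock {m : ℤ} (h : val x + val y = val z + m) (ℓ n : ℕ) :
    hBlock ℓ x n ≤ hBlock ℓ y n + hBlock ℓ z n + 2 / ℓ := by
  obtain ⟨c, hc, hrange⟩ := exists_isCarry h
  let carryIn (i : ℕ) : Finset.Icc (-1 : ℤ) 2 := ⟨c (i + ℓ), hrange _⟩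
  set s := Finset.range (n + 1 - ℓ) with hs
  have hcarry : empEntropy s carryIn ≤ 2 := by
    refine (empEntropy_le_logb_card s carryIn).trans_eq ?_
    have hcard : Fintype.card (Finset.Icc (-1 : ℤ) 2) = 2 ^ 2 := by simp
    rw [hcard, Nat.cast_pow, Real.logb_pow, Nat.cast_ofNat, Real.logb_self_eq_one one_lt_two,
      mul_one]
  have hblock : empEntropy s (block x ℓ) ≤
      empEntropy s (block y ℓ) + empEntropy s (block z ℓ) + 2 := by
    calc empEntropy s (block x ℓ)
        ≤ empEntropy s (fun i => ((block y ℓ i, block z ℓ i), carryIn i)) := by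
          refine empEntropy_le_of_determined fun i _ j _ hij => ?_
          simp only [Prod.mk.injEq] at hij
          exact (hc.block_eq hij.1.1 hij.1.2 (congrArg Subtype.val hij.2)).1
      _ ≤ empEntropy s (fun i => (block y ℓ i, block z ℓ i)) + empEntropy s carryIn :=
          empEntropy_prodMk_le s _ carryIn
      _ ≤ empEntropy s (block y ℓ) + empEntropy s (block z ℓ) + 2 :=
          add_le_add (empEntropy_prodMk_le s _ _) hcarry
  simp only [hBlock_eq_empEntropy_div, ← hs, ← add_div]
  exact div_le_div_of_nonneg_right hblock ℓ.cast_nonneg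

end Carry

section Limits

variable {ι : Type*} {l : Filter ι}

section Preorder

variable {R : Type*} [Preorder R] {f : ι → R} {a b : R}

lemma isBoundedUnder_le_of_mem_Icc (h : ∀ i, f i ∈ Set.Icc a b) : l.IsBoundedUnder (· ≤ ·) f :=
  isBoundedUnder_of ⟨b, fun i => (h i).2⟩

lemma isBoundedUnder_ge_of_mem_Icc (h : ∀ i, f i ∈ Set.Icc a b) : l.IsBoundedUnder (· ≥ ·) f :=
  isBoundedUnder_of ⟨a, fun i => (h i).1⟩

end Preorder

section ConditionallyCompleteLinearOrder

variable {R : Type*} [ConditionallyCompleteLinearOrder R] {f : ι → R} {a b : R}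

lemma liminf_mem_Icc [l.NeBot] (h : ∀ i, f i ∈ Set.Icc a b) : liminf f l ∈ Set.Icc a b :=
  ⟨le_liminf_of_le (isBoundedUnder_le_of_mem_Icc h).isCoboundedUnder_ge
      (.of_forall fun i => (h i).1),
    liminf_le_of_frequently_le (.of_forall fun i => (h i).2) (isBoundedUnder_ge_of_mem_Icc h)⟩

lemma limsup_mem_Icc [l.NeBot] (h : ∀ i, f i ∈ Set.Icc a b) : limsup f l ∈ Set.Icc a b :=
  ⟨le_limsup_of_frequently_le (.of_forall fun i => (h i).1) (isBoundedUnder_le_of_mem_Icc h),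
    limsup_le_of_le (isBoundedUnder_ge_of_mem_Icc h).isCoboundedUnder_le
      (.of_forall fun i => (h i).2)⟩

end ConditionallyCompleteLinearOrder

lemma liminf_le_limsup_add_liminf_add [l.NeBot] {f g h e : ι → ℝ} {c : ℝ}
    (hle : ∀ᶠ i in l, f i ≤ g i + h i + e i) (he : Tendsto e l (𝓝 c))
    (hf : l.IsBoundedUnder (· ≥ ·) f)
    (hg_le : l.IsBoundedUnder (· ≤ ·) g) (hg_ge : l.IsBoundedUnder (· ≥ ·) g)
    (hh_le : l.IsCoboundedUnder (· ≥ ·) h) (hh_ge : l.IsBoundedUnder (· ≥ ·) h) :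
    liminf f l ≤ limsup g l + liminf h l + c := by
  have hge_le : l.IsBoundedUnder (· ≤ ·) (g + e) :=
    isBoundedUnder_le_add hg_le he.isBoundedUnder_le
  have hge_ge : l.IsBoundedUnder (· ≥ ·) (g + e) :=
    isBoundedUnder_ge_add hg_ge he.isBoundedUnder_ge
  calc liminf f l
      ≤ liminf (g + e + h) l :=
        liminf_le_liminf
          (hle.mono fun i hi => by simpa only [Pi.add_apply, add_right_comm] using hi) hf
          (isCoboundedUnder_ge_add hge_le hh_le)
    _ ≤ limsup (g + e) l + liminf h l := liminf_add_le hge_ge hge_le hh_ge hh_le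
    _ ≤ limsup g l + limsup e l + liminf h l := by
        gcongr
        exact limsup_add_le hg_ge hg_le he.isBoundedUnder_ge.isCoboundedUnder_le
          he.isBoundedUnder_le
    _ = limsup g l + liminf h l + c := by rw [he.limsup_eq, add_right_comm]

end Limits

lemma hLow_mem_Icc (x : ℕ → Bool) : hLow x ∈ Set.Icc 0 1 :=
  liminf_mem_Icc fun ℓ => liminf_mem_Icc (hBlock_mem_Icc ℓ x)

theorem hLow_le_hUp_add_hLow {x y z : ℕ → Bool} {m : ℤ} (h : val x + val y = val z + m) :
    hLow x ≤ hUp y + hLow z := by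
  have hliminf (ℓ : ℕ) : (atTop.liminf fun n => hBlock ℓ x n) ≤
      (atTop.limsup fun n => hBlock ℓ y n) + (atTop.liminf fun n => hBlock ℓ z n) + 2 / ℓ :=
    liminf_le_limsup_add_liminf_add (.of_forall (hBlock_le_hBlock_add_hBlock h ℓ))
      tendsto_const_nhds (isBoundedUnder_ge_of_mem_Icc (hBlock_mem_Icc ℓ x))
      (isBoundedUnder_le_of_mem_Icc (hBlock_mem_Icc ℓ y))
      (isBoundedUnder_ge_of_mem_Icc (hBlock_mem_Icc ℓ y))
      (isBoundedUnder_le_of_mem_Icc (hBlock_mem_Icc ℓ z)).isCoboundedUnder_ge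
      (isBoundedUnder_ge_of_mem_Icc (hBlock_mem_Icc ℓ z))
  have hx (ℓ : ℕ) := liminf_mem_Icc (l := atTop) (hBlock_mem_Icc ℓ x)
  have hy (ℓ : ℕ) := limsup_mem_Icc (l := atTop) (hBlock_mem_Icc ℓ y)
  have hz (ℓ : ℕ) := liminf_mem_Icc (l := atTop) (hBlock_mem_Icc ℓ z)
  rw [← add_zero (hUp y + hLow z)]
  exact liminf_le_limsup_add_liminf_add (.of_forall hliminf)
    (tendsto_const_div_atTop_nhds_zero_nat 2) (isBoundedUnder_ge_of_mem_Icc hx)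
    (isBoundedUnder_le_of_mem_Icc hy) (isBoundedUnder_ge_of_mem_Icc hy)
    (isBoundedUnder_le_of_mem_Icc hz).isCoboundedUnder_ge (isBoundedUnder_ge_of_mem_Icc hz)

theorem hLow_add_eq_one_of_hLow_eq_one_of_hUp_eq_zero (x y z : ℕ → Bool)
    (hz : val z = Int.fract (val x + val y))
    (hx : hLow x = 1) (hy : hUp y = 0) :
    hLow z = 1 := by
  have h : val x + val y = val z + ⌊val x + val y⌋ := by rw [hz, Int.fract_add_floor]
  refine le_antisymm (hLow_mem_Icc z).2 ?_
  simpa only [hx, hy, zero_add] using hLow_le_hUp_add_hLow h
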